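/- Let K be a complete non-archimedean field of residue characteristic p > 0 with |p| < 1, let c ∈ K, ρ ≥ 0, and a ∈ K. Then the Gauss seminorm of the polynomial T^p − a at the point x_{c,ρ} satisfies x_{c,ρ}(T^p − a) = max(|c^p − a|, |p|·|c|^{p−1}·ρ, ρ^p). -/

import Mathlib

/-!
The terms of the supremum defining `x_{c,ρ}(T^m - a)` are the absolute values of the coefficients of
`((T - c) + c)^m - a` in powers of `T - c`, weighted by powers of `ρ`. When `m` is prime, it divides
the middle binomial coefficients, so in an ultrametric field the `n`-th term with `0 < n < m` is at
most `|m| |c|^(m-n) ρ^n`. If `ρ ≤ |c|` this is bounded by the term `n = 1`, and otherwise by the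
term `n = m`.
-/

open Polynomial

/-- The Gauss seminorm `x_{c,ρ}` on `K[T]`:
`x_{c,ρ}(f) = sup_n ‖f^{(n)}(c)/n!‖ · ρ^n`, expressed via Hasse derivatives. -/
noncomputable def gaussSeminorm {K : Type*} [NontriviallyNormedField K]
    (c : K) (ρ : ℝ) (f : Polynomial K) : ℝ :=
  ⨆ n : ℕ, ‖(Polynomial.hasseDeriv n f).eval c‖ * ρ ^ n

theorem pow_sub_mul_pow_le_max {R : Type*} [CommSemiring R] [LinearOrder R] [IsOrderedRing R]
    {x y : R} (hx : 0 ≤ x) (hy : 0 ≤ y) {i n m : ℕ} (hin : i ≤ n) (hnm : n ≤ m) :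
    x ^ (m - n) * y ^ n ≤ max (x ^ (m - i) * y ^ i) (y ^ m) := by
  rcases le_total y x with hyx | hxy
  · refine le_max_of_le_left ?_
    calc x ^ (m - n) * y ^ n = x ^ (m - n) * (y ^ (n - i) * y ^ i) := by rw [pow_sub_mul_pow y hin]
      _ ≤ x ^ (m - n) * (x ^ (n - i) * y ^ i) := by gcongr
      _ = x ^ (m - i) * y ^ i := by rw [← mul_assoc, ← pow_add, Nat.sub_add_sub_cancel hnm hin]
  · refine le_max_of_le_right ?_
    calc x ^ (m - n) * y ^ n ≤ y ^ (m - n) * y ^ n := by gcongr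
      _ = y ^ m := pow_sub_mul_pow y hnm

theorem norm_natCast_le_norm_natCast_of_dvd {R : Type*} [SeminormedRing R] [NormOneClass R]
    [IsUltrametricDist R] {m n : ℕ} (h : m ∣ n) : ‖(n : R)‖ ≤ ‖(m : R)‖ := by
  obtain ⟨k, rfl⟩ := h
  calc ‖((m * k : ℕ) : R)‖ ≤ ‖(m : R)‖ * ‖(k : R)‖ := by
        rw [Nat.cast_mul]
        exact norm_mul_le _ _
    _ ≤ ‖(m : R)‖ := mul_le_of_le_one_right (norm_nonneg _)
        (IsUltrametricDist.norm_natCast_le_one R k)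

theorem norm_choose_mul_pow_mul_pow_le_max {R : Type*} [SeminormedRing R] [NormOneClass R]
    [IsUltrametricDist R] {m n : ℕ}
    (hchoose : ∀ k, 0 < k → k < m → ‖(m.choose k : R)‖ ≤ ‖(m : R)‖)
    {x y : ℝ} (hx : 0 ≤ x) (hy : 0 ≤ y) (hn : 0 < n) (hnm : n ≤ m) :
    ‖(m.choose n : R)‖ * x ^ (m - n) * y ^ n ≤ max (‖(m : R)‖ * x ^ (m - 1) * y) (y ^ m) := by
  rcases hnm.eq_or_lt with rfl | hlt
  · simp
  calc ‖(m.choose n : R)‖ * x ^ (m - n) * y ^ n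
      ≤ ‖(m : R)‖ * (x ^ (m - n) * y ^ n) := by
        rw [mul_assoc]
        gcongr
        exact hchoose n hn hlt
    _ ≤ ‖(m : R)‖ * max (x ^ (m - 1) * y) (y ^ m) := by
        gcongr
        simpa only [pow_one] using pow_sub_mul_pow_le_max hx hy hn hnm
    _ = max (‖(m : R)‖ * x ^ (m - 1) * y) (‖(m : R)‖ * y ^ m) := by
        rw [mul_max_of_nonneg _ _ (norm_nonneg _), mul_assoc]
    _ ≤ max (‖(m : R)‖ * x ^ (m - 1) * y) (y ^ m) := by
        gcongr
        exact mul_le_of_le_one_left (pow_nonneg hy m) (IsUltrametricDist.norm_natCast_le_one R m)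

theorem eval_hasseDeriv_X_pow_sub_C {R : Type*} [Ring R] (m : ℕ) {n : ℕ} (hn : 0 < n) (c a : R) :
    (hasseDeriv n (X ^ m - C a)).eval c = (m.choose n : R) * c ^ (m - n) := by
  rw [map_sub, hasseDeriv_C n a hn, sub_zero, ← monomial_one_right_eq_X_pow, hasseDeriv_monomial,
    eval_monomial, mul_one]

section GaussSeminorm

variable {K : Type*} [NontriviallyNormedField K]

theorem bddAbove_range_norm_eval_hasseDeriv_mul_pow (c : K) (ρ : ℝ) (f : K[X]) :
    BddAbove (Set.range fun n : ℕ ↦ ‖(hasseDeriv n f).eval c‖ * ρ ^ n) := by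
  have eventually_zero : ∀ᶠ n : ℕ in Filter.atTop, ‖(hasseDeriv n f).eval c‖ * ρ ^ n = 0 := by
    filter_upwards [Filter.eventually_gt_atTop f.natDegree] with n hn
    rw [hasseDeriv_eq_zero_of_lt_natDegree f n hn, eval_zero, norm_zero, zero_mul]
  exact (tendsto_const_nhds.congr' (eventually_zero.mono fun _ h ↦ h.symm)).bddAbove_range

theorem gaussSeminorm_le_iff {c : K} {ρ : ℝ} {f : K[X]} {M : ℝ} :
    gaussSeminorm c ρ f ≤ M ↔ ∀ n, ‖(hasseDeriv n f).eval c‖ * ρ ^ n ≤ M :=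
  ciSup_le_iff (bddAbove_range_norm_eval_hasseDeriv_mul_pow c ρ f)

theorem gaussSeminorm_X_pow_sub_C_le_iff {m : ℕ} {c a : K} {ρ M : ℝ} :
    gaussSeminorm c ρ (X ^ m - C a) ≤ M ↔ ‖c ^ m - a‖ ≤ M ∧
      ∀ n, 0 < n → n ≤ m → ‖(m.choose n : K)‖ * ‖c‖ ^ (m - n) * ρ ^ n ≤ M := by
  have term_zero : ‖(hasseDeriv 0 (X ^ m - C a)).eval c‖ * ρ ^ 0 = ‖c ^ m - a‖ := by simp
  have term_pos {n : ℕ} (hn : 0 < n) : ‖(hasseDeriv n (X ^ m - C a)).eval c‖ * ρ ^ n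
      = ‖(m.choose n : K)‖ * ‖c‖ ^ (m - n) * ρ ^ n := by
    rw [eval_hasseDeriv_X_pow_sub_C m hn, norm_mul, norm_pow]
  rw [gaussSeminorm_le_iff]
  refine ⟨fun h ↦ ⟨term_zero ▸ h 0, fun n hn _ ↦ term_pos hn ▸ h n⟩, fun ⟨h_zero, h_pos⟩ n ↦ ?_⟩
  rcases n.eq_zero_or_pos with rfl | hn
  · exact term_zero.trans_le h_zero
  rw [term_pos hn]
  rcases le_or_gt n m with hnm | hmn
  · exact h_pos n hn hnm
  · simpa [Nat.choose_eq_zero_of_lt hmn] using (norm_nonneg _).trans h_zero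

theorem gaussSeminorm_X_pow_p_sub_general [IsUltrametricDist K] {m : ℕ} (hm : 0 < m)
    (hchoose : ∀ n, 0 < n → n < m → ‖(m.choose n : K)‖ ≤ ‖(m : K)‖)
    (c a : K) {ρ : ℝ} (hρ : 0 ≤ ρ) :
    gaussSeminorm c ρ (X ^ m - C a)
      = max (max ‖c ^ m - a‖ (‖(m : K)‖ * ‖c‖ ^ (m - 1) * ρ)) (ρ ^ m) := by
  refine eq_of_forall_ge_iff fun M ↦ ?_
  rw [gaussSeminorm_X_pow_sub_C_le_iff, max_assoc, max_le_iff]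
  refine and_congr_right fun _ ↦ ⟨fun h ↦ max_le ?_ ?_, fun h n hn hnm ↦ ?_⟩
  · simpa using h 1 one_pos hm
  · simpa using h m hm le_rfl
  · exact (norm_choose_mul_pow_mul_pow_le_max hchoose (norm_nonneg c) hρ hn hnm).trans h

end GaussSeminorm

/-- For `K` of residue characteristic `p` (`|p| < 1`), the Gauss seminorm of `T^p − a`
at `x_{c,ρ}` is `max(|c^p − a|, |p|·|c|^{p−1}·ρ, ρ^p)`. -/
theorem gaussSeminorm_X_pow_p_sub
    {K : Type*} [NontriviallyNormedField K] [CompleteSpace K] [IsUltrametricDist K]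
    (p : ℕ) (hp : p.Prime) (hpK : ‖(p : K)‖ < 1)
    (c a : K) (ρ : ℝ) (hρ : 0 ≤ ρ) :
    gaussSeminorm c ρ (X ^ p - C a)
      = max (max ‖c ^ p - a‖ (‖(p : K)‖ * ‖c‖ ^ (p - 1) * ρ)) (ρ ^ p) :=
  gaussSeminorm_X_pow_p_sub_general hp.pos
    (fun _ hn hnp ↦ norm_natCast_le_norm_natCast_of_dvd (hp.dvd_choose_self hn.ne' hnp)) c a hρ
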